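/- Let n ≥ 1 be an integer and let ρ be an irreducible finite-dimensional complex representation of SL(2, ℤ/nℤ) such that ρ(t) has at most three distinct eigenvalues. Then the dimension of ρ equals the number of distinct eigenvalues of ρ(t); in other words, the t-spectrum of ρ is multiplicity-free (ρ is nondegenerate). -/

import Mathlib

/-- The group `SL(2, ℤ/nℤ)`. -/
abbrev SL2 (n : ℕ) := Matrix.SpecialLinearGroup (Fin 2) (ZMod n)

/-- The element `t = [[1,1],[0,1]]` of `SL(2, ℤ/nℤ)`. -/
def tGen (n : ℕ) : SL2 n := ⟨!![1, 1; 0, 1], by simp [Matrix.det_fin_two_of]⟩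

/-- A representation is irreducible if the space is nonzero and the only invariant
subspaces are `⊥` and `⊤`. -/
def IsIrreducibleRep {G V : Type} [Group G] [AddCommGroup V] [Module ℂ V]
    (ρ : Representation ℂ G V) : Prop :=
  Nontrivial V ∧ ∀ p : Submodule ℂ V, (∀ g : G, p.map (ρ g) ≤ p) → p = ⊥ ∨ p = ⊤


def sGen (n : ℕ) : SL2 n := ⟨!![0, -1; 1, 0], by simp [Matrix.det_fin_two_of]⟩

def uMat (n : ℕ) (x : ZMod n) : SL2 n := ⟨!![1, x; 0, 1], by simp [Matrix.det_fin_two_of]⟩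

def lMat (n : ℕ) (x : ZMod n) : SL2 n := ⟨!![1, 0; x, 1], by simp [Matrix.det_fin_two_of]⟩

lemma sGen_coe (n : ℕ) : (sGen n : Matrix (Fin 2) (Fin 2) (ZMod n)) = !![0, -1; 1, 0] := rfl

lemma tGen_coe (n : ℕ) : (tGen n : Matrix (Fin 2) (Fin 2) (ZMod n)) = !![1, 1; 0, 1] := rfl

lemma uMat_coe (n : ℕ) (x : ZMod n) :
    (uMat n x : Matrix (Fin 2) (Fin 2) (ZMod n)) = !![1, x; 0, 1] := rfl

lemma lMat_coe (n : ℕ) (x : ZMod n) :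
    (lMat n x : Matrix (Fin 2) (Fin 2) (ZMod n)) = !![1, 0; x, 1] := rfl

lemma uMat_add (n : ℕ) (x y : ZMod n) : uMat n (x + y) = uMat n x * uMat n y := by
  ext i j
  fin_cases i <;> fin_cases j <;> simp [uMat_coe, Matrix.mul_apply, Fin.sum_univ_two, add_comm]

lemma uMat_mem (n : ℕ) [NeZero n] (H : Subgroup (SL2 n)) (ht : tGen n ∈ H) (x : ZMod n) :
    uMat n x ∈ H := by
  have h : ∀ k : ℕ, uMat n (k : ZMod n) ∈ H := by
    intro k
    induction k with
    | zero =>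
      have : uMat n ((0 : ℕ) : ZMod n) = 1 := by
        ext i j
        fin_cases i <;> fin_cases j <;> simp [uMat_coe]
      rw [this]; exact H.one_mem
    | succ k ih =>
      rw [Nat.cast_succ, uMat_add]
      exact H.mul_mem ih ht
  have := h x.val
  rwa [ZMod.natCast_zmod_val] at this

lemma lMat_mem (n : ℕ) [NeZero n] (H : Subgroup (SL2 n)) (hs : sGen n ∈ H) (ht : tGen n ∈ H)
    (x : ZMod n) : lMat n x ∈ H := by
  have : lMat n x = sGen n * uMat n (-x) * (sGen n)⁻¹ := by
    rw [eq_mul_inv_iff_mul_eq]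
    ext i j
    fin_cases i <;> fin_cases j <;>
      simp [lMat_coe, uMat_coe, sGen_coe, Matrix.mul_apply, Fin.sum_univ_two]
  rw [this]
  exact H.mul_mem (H.mul_mem hs (uMat_mem n H ht _)) (H.inv_mem hs)

lemma tri_mem (n : ℕ) [NeZero n] (H : Subgroup (SL2 n)) (hs : sGen n ∈ H) (ht : tGen n ∈ H)
    (M : SL2 n) (hM : M 1 0 = 0) : M ∈ H := by
  have hdet := M.det_coe
  rw [Matrix.det_fin_two, hM] at hdet
  have had : M 0 0 * M 1 1 = 1 := by simpa using hdet
  have : uMat n (-(M 0 0 * M 0 1)) * M =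
      uMat n (M 0 0) * lMat n (-(M 1 1)) * uMat n (M 0 0) * sGen n := by
    ext i j
    fin_cases i <;> fin_cases j <;>
      simp [lMat_coe, uMat_coe, sGen_coe, Matrix.mul_apply, Fin.sum_univ_two, hM] 
    · linear_combination (-(M 0 0)) * had
    · linear_combination (-(M 0 1) - 1) * had
    · linear_combination had
  have h2 := uMat_mem n H ht
  rw [← Subgroup.mul_mem_cancel_left H (h2 (-(M 0 0 * M 0 1))), this]
  exact H.mul_mem (H.mul_mem (H.mul_mem (h2 _) (lMat_mem n H hs ht _)) (h2 _)) hs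

lemma gen_mem (n : ℕ) [NeZero n] (H : Subgroup (SL2 n)) (hs : sGen n ∈ H) (ht : tGen n ∈ H) :
    ∀ (N a c : ℕ), a + c ≤ N → ∀ M : SL2 n, M 0 0 = a → M 1 0 = c → M ∈ H := by
  intro N
  induction N with
  | zero =>
    intro a c h M ha hc
    obtain rfl : c = 0 := by omega
    exact tri_mem n H hs ht M (by simpa using hc)
  | succ N ih =>
    intro a c h M ha hc
    rcases Nat.eq_zero_or_pos c with rfl | hc0
    · exact tri_mem n H hs ht M (by simpa using hc)
    rcases Nat.eq_zero_or_pos a with rfl | ha0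
    · rw [← Subgroup.mul_mem_cancel_left H hs]
      apply tri_mem n H hs ht
      simpa [sGen_coe, Matrix.mul_apply, Fin.sum_univ_two] using ha
    rcases le_total a c with hac | hac
    · rw [← Subgroup.mul_mem_cancel_left H (lMat_mem n H hs ht (-1))]
      apply ih a (c - a) (by omega)
      · simpa [lMat_coe, Matrix.mul_apply, Fin.sum_univ_two] using ha
      · simp [lMat_coe, Matrix.mul_apply, Fin.sum_univ_two, ha, hc, Nat.cast_sub hac]
        ring
    · rw [← Subgroup.mul_mem_cancel_left H (uMat_mem n H ht (-1))]
      apply ih (a - c) c (by omega)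
      · simp [uMat_coe, Matrix.mul_apply, Fin.sum_univ_two, ha, hc, Nat.cast_sub hac]
        ring
      · simpa [uMat_coe, Matrix.mul_apply, Fin.sum_univ_two] using hc

lemma gen_top (n : ℕ) [NeZero n] (H : Subgroup (SL2 n)) (hs : sGen n ∈ H) (ht : tGen n ∈ H)
    (M : SL2 n) : M ∈ H :=
  gen_mem n H hs ht _ (M 0 0).val (M 1 0).val le_rfl M (by simp) (by simp)

lemma s_sq_comm (n : ℕ) (g : SL2 n) : Commute (sGen n ^ 2) g := by
  have : ((sGen n ^ 2 : SL2 n) : Matrix (Fin 2) (Fin 2) (ZMod n)) = -1 := by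
    ext i j
    fin_cases i <;> fin_cases j <;> simp [sGen_coe, pow_two, Matrix.mul_apply, Fin.sum_univ_two]
  apply Subtype.ext
  simp only [Matrix.SpecialLinearGroup.coe_mul, this]
  simp

lemma st_cube (n : ℕ) : (sGen n * tGen n) ^ 3 = sGen n ^ 2 := by
  ext i j
  fin_cases i <;> fin_cases j <;>
    simp [sGen_coe, tGen_coe, pow_succ, Matrix.mul_apply, Fin.sum_univ_two]

/-- The commutator map of an endomorphism; its kernel is the centralizer. -/
noncomputable def cent {V : Type} [AddCommGroup V] [Module ℂ V] (X : Module.End ℂ V) :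
    Submodule ℂ (Module.End ℂ V) :=
  LinearMap.ker (LinearMap.mulLeft ℂ X - LinearMap.mulRight ℂ X)

lemma mem_cent {V : Type} [AddCommGroup V] [Module ℂ V] (X f : Module.End ℂ V) :
    f ∈ cent X ↔ X * f = f * X := by
  simp [cent, sub_eq_zero]

lemma count_pairs {ι : Type} [Fintype ι] [DecidableEq ι] (e : ι → ℂ) (K : Finset ℂ)
    (hK : ∀ i, e i ∈ K) :
    Fintype.card ι ^ 2 ≤ K.card * Fintype.card {p : ι × ι // e p.1 = e p.2} := by
  classical
  have h1 : Fintype.card ι = ∑ μ ∈ K, (Finset.univ.filter (fun i => e i = μ)).card := by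
    rw [← Finset.card_univ]
    exact Finset.card_eq_sum_card_fiberwise (fun i _ => hK i)
  have h2 : Fintype.card {p : ι × ι // e p.1 = e p.2} =
      ∑ μ ∈ K, (Finset.univ.filter (fun i => e i = μ)).card ^ 2 := by
    rw [Fintype.card_subtype, Finset.card_eq_sum_card_fiberwise (f := fun p : ι × ι => e p.1)
      (t := K) (fun p _ => hK p.1)]
    refine Finset.sum_congr rfl fun μ _ => ?_
    rw [pow_two, ← Finset.card_product]
    congr 1
    ext ⟨i, j⟩
    simp only [Finset.mem_filter, Finset.mem_univ, true_and, Finset.mem_product]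
    constructor
    · rintro ⟨h, h'⟩; exact ⟨h', h ▸ h'⟩
    · rintro ⟨h, h'⟩; exact ⟨h.trans h'.symm, h⟩
  rw [h2, h1]
  have := sq_sum_le_card_mul_sum_sq (s := K)
    (f := fun μ => (Finset.univ.filter (fun i => e i = μ)).card)
  simpa using this

lemma cent_bound {V : Type} [AddCommGroup V] [Module ℂ V] [FiniteDimensional ℂ V]
    (X : Module.End ℂ V) (m : ℕ) (hm : 0 < m) (hX : X ^ m = 1) (K : Finset ℂ)
    (hK : spectrum ℂ X ⊆ K) :
    Module.finrank ℂ V ^ 2 ≤ K.card * Module.finrank ℂ (cent X) := by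
  classical
  have hss : X.IsSemisimple := by
    apply Module.End.isSemisimple_of_squarefree_aeval_eq_zero
      (p := (Polynomial.X ^ m - Polynomial.C 1 : Polynomial ℂ))
    · exact (Polynomial.separable_X_pow_sub_C (1 : ℂ) (by exact_mod_cast hm.ne')
        one_ne_zero).squarefree
    · simp [hX]
  have htop := hss.iSup_eigenspace_eq_top
  have hspan : ⊤ ≤ Submodule.span ℂ {v : V | ∃ μ : ℂ, X v = μ • v} := by
    rw [← htop]
    refine iSup_le fun μ v hv => Submodule.subset_span ⟨μ, ?_⟩
    exact Module.End.mem_eigenspace_iff.mp hv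
  let b := Module.Basis.ofSpan hspan
  have hb : ∀ i, ∃ μ : ℂ, X (b i) = μ • b i :=
    fun i => Module.Basis.ofSpan_subset hspan ⟨i, rfl⟩
  choose e he using hb
  have := FiniteDimensional.fintypeBasisIndex b
  have heK : ∀ i, e i ∈ K := by
    intro i
    apply hK
    apply Module.End.HasEigenvalue.mem_spectrum
    exact Module.End.hasEigenvalue_of_hasEigenvector
      ⟨Module.End.mem_eigenspace_iff.mpr (he i), b.ne_zero i⟩
  have h1 := count_pairs e K heK
  rw [Module.finrank_eq_card_basis b]
  refine h1.trans (Nat.mul_le_mul_left _ ?_)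
  let B := b.linearMap b
  have hli : LinearIndependent ℂ
      (fun p : {p : _ × _ // e p.1 = e p.2} => B p.1) :=
    B.linearIndependent.comp _ Subtype.val_injective
  rw [← finrank_span_eq_card hli]
  apply Submodule.finrank_mono
  rw [Submodule.span_le]
  rintro _ ⟨⟨⟨i, j⟩, hij⟩, rfl⟩
  rw [SetLike.mem_coe, mem_cent]
  apply b.ext
  intro k
  simp only [B, Module.End.mul_apply, he, map_smul, Module.Basis.linearMap_apply_apply]
  split_ifs with h
  · subst h
    simp only at hij
    rw [he, hij]
  · simp

lemma spec_card {V : Type} [AddCommGroup V] [Module ℂ V] [FiniteDimensional ℂ V]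
    (X : Module.End ℂ V) : (spectrum ℂ X).ncard ≤ Module.finrank ℂ V := by
  classical
  have hf : (spectrum ℂ X).Finite := Module.End.finite_spectrum X
  have := hf.fintype
  have : ∀ μ : spectrum ℂ X, ∃ v, X.HasEigenvector (μ : ℂ) v := fun μ =>
    (Module.End.hasEigenvalue_iff_mem_spectrum.mpr μ.2).exists_hasEigenvector
  choose v hv using this
  have := (Module.End.eigenvectors_linearIndependent X (spectrum ℂ X) v hv).fintype_card_le_finrank
  rwa [← Nat.card_eq_fintype_card, Nat.card_coe_set_eq] at this

lemma abstract_bound {W : Type} [AddCommGroup W] [Module ℂ W] [FiniteDimensional ℂ W]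
    (P Q : W →ₗ[ℂ] W) (C : Submodule ℂ W) (hPQ : ∀ m ∈ C, P m = Q m)
    (hC : Module.finrank ℂ (C ⊓ LinearMap.ker P : Submodule ℂ W) ≤ 1)
    (hR : Module.finrank ℂ (LinearMap.range P ⊔ LinearMap.range Q).dualAnnihilator ≤ 1) :
    Module.finrank ℂ (LinearMap.ker P) + Module.finrank ℂ (LinearMap.ker Q) +
      Module.finrank ℂ C ≤ Module.finrank ℂ W + 2 := by
  have h1 := P.finrank_range_add_finrank_ker
  have h2 := Q.finrank_range_add_finrank_ker
  have h3 := Submodule.finrank_sup_add_finrank_inf_eq (LinearMap.range P) (LinearMap.range Q)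
  have h4 := Subspace.finrank_add_finrank_dualAnnihilator_eq
    (LinearMap.range P ⊔ LinearMap.range Q)
  have h5 := (P.domRestrict C).finrank_range_add_finrank_ker
  have h6 : Module.finrank ℂ (LinearMap.range (P.domRestrict C)) ≤
      Module.finrank ℂ (LinearMap.range P ⊓ LinearMap.range Q : Submodule ℂ W) := by
    apply Submodule.finrank_mono
    rintro _ ⟨⟨m, hm⟩, rfl⟩
    exact ⟨⟨m, rfl⟩, ⟨m, (hPQ m hm).symm⟩⟩
  have h7 : Module.finrank ℂ (LinearMap.ker (P.domRestrict C)) ≤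
      Module.finrank ℂ (C ⊓ LinearMap.ker P : Submodule ℂ W) := by
    rw [← Submodule.finrank_map_subtype_eq]
    apply Submodule.finrank_mono
    rintro _ ⟨⟨m, hm⟩, hk, rfl⟩
    exact ⟨hm, hk⟩
  omega

lemma trace_inj {V : Type} [AddCommGroup V] [Module ℂ V] [FiniteDimensional ℂ V]
    (f : Module.End ℂ V) (h0 : ∀ m, LinearMap.trace ℂ V (f * m) = 0) : f = 0 := by
  ext v
  rw [LinearMap.zero_apply, ← Module.forall_dual_apply_eq_zero_iff ℂ]
  intro φ
  have h := h0 (φ.smulRight v)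
  have h' : f * (φ.smulRight v : V →ₗ[ℂ] V) = φ.smulRight (f v) := by
    ext w; simp
  rw [h', LinearMap.trace_smulRight] at h
  exact h

lemma exists_trace_rep {V : Type} [AddCommGroup V] [Module ℂ V] [FiniteDimensional ℂ V]
    (l : Module.Dual ℂ (Module.End ℂ V)) :
    ∃ f : Module.End ℂ V, ∀ m, l m = LinearMap.trace ℂ V (f * m) := by
  let Φ : Module.End ℂ V →ₗ[ℂ] Module.Dual ℂ (Module.End ℂ V) :=
    (LinearMap.mul ℂ (Module.End ℂ V)).compr₂ (LinearMap.trace ℂ V)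
  have hinj : Function.Injective Φ := by
    rw [injective_iff_map_eq_zero]
    intro f hf
    exact trace_inj f fun m => LinearMap.congr_fun hf m
  have hsurj : Function.Surjective Φ :=
    (LinearMap.injective_iff_surjective_of_finrank_eq_finrank
      (Subspace.dual_finrank_eq).symm).mp hinj
  obtain ⟨f, hf⟩ := hsurj l
  exact ⟨f, fun m => by rw [← hf]; rfl⟩

lemma schur {n : ℕ} {V : Type} [AddCommGroup V] [Module ℂ V] [FiniteDimensional ℂ V]
    (ρ : Representation ℂ (SL2 n) V) (hirr : IsIrreducibleRep ρ) (f : Module.End ℂ V)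
    (hf : ∀ g, f * ρ g = ρ g * f) : ∃ c : ℂ, f = c • 1 := by
  have : Nontrivial V := hirr.1
  obtain ⟨c, hc⟩ := Module.End.exists_eigenvalue f
  refine ⟨c, ?_⟩
  have h := hirr.2 (f.eigenspace c) (by
    rintro g _ ⟨v, hv, rfl⟩
    have hv' := Module.End.mem_eigenspace_iff.mp hv
    rw [Module.End.mem_eigenspace_iff, ← Module.End.mul_apply, hf, Module.End.mul_apply, hv',
      map_smul])
  have htop := h.resolve_left hc
  ext v
  have : v ∈ f.eigenspace c := by rw [htop]; trivial
  simpa using Module.End.mem_eigenspace_iff.mp this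

lemma schur_st {n : ℕ} [NeZero n] {V : Type} [AddCommGroup V] [Module ℂ V]
    [FiniteDimensional ℂ V] (ρ : Representation ℂ (SL2 n) V) (hirr : IsIrreducibleRep ρ)
    (f : Module.End ℂ V) (hs : f * ρ (sGen n) = ρ (sGen n) * f)
    (ht : f * ρ (tGen n) = ρ (tGen n) * f) : ∃ c : ℂ, f = c • 1 := by
  let H : Subgroup (SL2 n) :=
    { carrier := {g | f * ρ g = ρ g * f}
      one_mem' := by simp
      mul_mem' := by
        intro a b ha hb
        simp only [Set.mem_ofPred_eq] at *
        rw [map_mul, ← mul_assoc, ha, mul_assoc, hb, mul_assoc]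
      inv_mem' := by
        intro a ha
        simp only [Set.mem_ofPred_eq] at *
        have h1 : ρ a⁻¹ * ρ a = 1 := by rw [← map_mul]; simp
        have h2 : ρ a * ρ a⁻¹ = 1 := by rw [← map_mul]; simp
        calc f * ρ a⁻¹ = ρ a⁻¹ * (ρ a * f) * ρ a⁻¹ := by
              rw [← mul_assoc (ρ a⁻¹), h1, one_mul]
          _ = ρ a⁻¹ * f := by rw [← ha, mul_assoc, mul_assoc f, h2, mul_one] }
  exact schur ρ hirr f fun g => gen_top n H hs ht g

/-- `m ↦ g m g⁻¹ - m`. -/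
noncomputable def conjSub {n : ℕ} {V : Type} [AddCommGroup V] [Module ℂ V]
    (ρ : Representation ℂ (SL2 n) V) (g : SL2 n) :
    Module.End ℂ V →ₗ[ℂ] Module.End ℂ V :=
  LinearMap.mulLeft ℂ (ρ g) ∘ₗ LinearMap.mulRight ℂ (ρ g⁻¹) - LinearMap.id

lemma conjSub_apply {n : ℕ} {V : Type} [AddCommGroup V] [Module ℂ V]
    (ρ : Representation ℂ (SL2 n) V) (g : SL2 n) (m : Module.End ℂ V) :
    conjSub ρ g m = ρ g * (m * ρ g⁻¹) - m := rfl

lemma rho_inv_mul {n : ℕ} {V : Type} [AddCommGroup V] [Module ℂ V]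
    (ρ : Representation ℂ (SL2 n) V) (g : SL2 n) : ρ g⁻¹ * ρ g = 1 := by
  rw [← map_mul]; simp

lemma rho_mul_inv {n : ℕ} {V : Type} [AddCommGroup V] [Module ℂ V]
    (ρ : Representation ℂ (SL2 n) V) (g : SL2 n) : ρ g * ρ g⁻¹ = 1 := by
  rw [← map_mul]; simp

lemma ker_conjSub {n : ℕ} {V : Type} [AddCommGroup V] [Module ℂ V]
    (ρ : Representation ℂ (SL2 n) V) (g : SL2 n) :
    LinearMap.ker (conjSub ρ g) = cent (ρ g) := by
  ext m
  rw [LinearMap.mem_ker, mem_cent, conjSub_apply, sub_eq_zero]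
  constructor
  · intro h
    nth_rewrite 2 [← h]
    rw [mul_assoc, mul_assoc, rho_inv_mul, mul_one]
  · intro h
    rw [← mul_assoc, h, mul_assoc, rho_mul_inv, mul_one]

lemma comm_of_annihilates {n : ℕ} {V : Type} [AddCommGroup V] [Module ℂ V]
    [FiniteDimensional ℂ V] (ρ : Representation ℂ (SL2 n) V) (g : SL2 n) (f : Module.End ℂ V)
    (h : ∀ m, LinearMap.trace ℂ V (f * conjSub ρ g m) = 0) : f * ρ g = ρ g * f := by
  have h1 : ρ g⁻¹ * f * ρ g - f = 0 := by
    apply trace_inj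
    intro m
    rw [← h m, conjSub_apply, sub_mul, mul_sub, map_sub, map_sub]
    congr 1
    rw [mul_assoc, mul_assoc, LinearMap.trace_mul_comm]
    simp only [mul_assoc]
  rw [sub_eq_zero] at h1
  nth_rewrite 2 [← h1]
  rw [← mul_assoc, ← mul_assoc, rho_mul_inv, one_mul]

lemma scott_bound (n : ℕ) [NeZero n] {V : Type} [AddCommGroup V] [Module ℂ V]
    [FiniteDimensional ℂ V] (ρ : Representation ℂ (SL2 n) V) (hirr : IsIrreducibleRep ρ) :
    Module.finrank ℂ (cent (ρ (sGen n))) + Module.finrank ℂ (cent (ρ (sGen n * tGen n))) +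
      Module.finrank ℂ (cent (ρ (tGen n))) ≤ Module.finrank ℂ V ^ 2 + 2 := by
  have hW : Module.finrank ℂ (Module.End ℂ V) = Module.finrank ℂ V ^ 2 := by
    rw [Module.finrank_linearMap, pow_two]
  rw [← hW, ← ker_conjSub, ← ker_conjSub]
  apply abstract_bound
  · intro m hm
    rw [mem_cent] at hm
    rw [conjSub_apply, conjSub_apply, mul_inv_rev, map_mul, map_mul]
    congr 1
    rw [mul_assoc (ρ (sGen n)), ← mul_assoc m, ← mul_assoc (ρ (tGen n)), ← mul_assoc (ρ (tGen n)),
      hm, mul_assoc m, rho_mul_inv, mul_one]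
  · have hle : (cent (ρ (tGen n)) ⊓ LinearMap.ker (conjSub ρ (sGen n))) ≤
        Submodule.span ℂ {(1 : Module.End ℂ V)} := by
      rintro f ⟨h1, h2⟩
      rw [ker_conjSub] at h2
      obtain ⟨c, hc⟩ := schur_st ρ hirr f ((mem_cent _ _).mp h2).symm ((mem_cent _ _).mp h1).symm
      rw [Submodule.mem_span_singleton]
      exact ⟨c, hc.symm⟩
    refine (Submodule.finrank_mono hle).trans ?_
    simpa using finrank_span_le_card (R := ℂ) ({(1 : Module.End ℂ V)} : Set (Module.End ℂ V))
  · have hle : (LinearMap.range (conjSub ρ (sGen n)) ⊔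
        LinearMap.range (conjSub ρ (sGen n * tGen n))).dualAnnihilator ≤
        Submodule.span ℂ {LinearMap.trace ℂ V} := by
      intro l hl
      rw [Submodule.mem_dualAnnihilator] at hl
      obtain ⟨f, hf⟩ := exists_trace_rep l
      have h1 := comm_of_annihilates ρ (sGen n) f fun m => by
        rw [← hf]; exact hl _ (Submodule.mem_sup_left ⟨m, rfl⟩)
      have h2 := comm_of_annihilates ρ (sGen n * tGen n) f fun m => by
        rw [← hf]; exact hl _ (Submodule.mem_sup_right ⟨m, rfl⟩)
      have h3 : f * ρ (tGen n) = ρ (tGen n) * f := by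
        rw [map_mul, ← mul_assoc, h1] at h2
        have h4 := congrArg (fun x => ρ (sGen n)⁻¹ * x) h2
        simp only [← mul_assoc, rho_inv_mul, one_mul] at h4
        exact h4
      obtain ⟨c, hc⟩ := schur_st ρ hirr f h1 h3
      rw [Submodule.mem_span_singleton]
      refine ⟨c, ?_⟩
      ext m
      rw [hf, hc]
      simp
    refine (Submodule.finrank_mono hle).trans ?_
    simpa using finrank_span_le_card (R := ℂ)
      ({LinearMap.trace ℂ V} : Set (Module.Dual ℂ (Module.End ℂ V)))

/-- If `ρ` is an irreducible finite-dimensional complex representation of `SL(2, ℤ/nℤ)`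
with at most three distinct `t`-eigenvalues, then the dimension of `ρ` equals the number
of distinct eigenvalues of `ρ(t)`, i.e. the `t`-spectrum is multiplicity-free. -/
theorem stmt3 (n : ℕ) (hn : 1 ≤ n)
    (V : Type) [AddCommGroup V] [Module ℂ V] [FiniteDimensional ℂ V]
    (ρ : Representation ℂ (SL2 n) V)
    (hirr : IsIrreducibleRep ρ)
    (h3 : (spectrum ℂ (ρ (tGen n))).ncard ≤ 3) :
    Module.finrank ℂ V = (spectrum ℂ (ρ (tGen n))).ncard := by
  classical
  have : NeZero n := ⟨by omega⟩
  have : Nontrivial V := hirr.1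
  have hpow : ∀ g : SL2 n, ρ g ^ Fintype.card (SL2 n) = 1 := fun g => by
    rw [← map_pow, pow_card_eq_one, map_one]
  have hpos : 0 < Fintype.card (SL2 n) := Fintype.card_pos
  have hbd : ∀ (g : SL2 n) (k : ℕ), 0 < k → (∀ h, Commute (g ^ k) h) →
      Module.finrank ℂ V ^ 2 ≤ k * Module.finrank ℂ (cent (ρ g)) := by
    intro g k hk hg
    obtain ⟨c, hc⟩ := schur ρ hirr (ρ (g ^ k)) (fun h => by
      rw [← map_mul, ← map_mul, (hg h).eq])
    have h1 := cent_bound (ρ g) _ hpos (hpow g) (Polynomial.nthRoots k c).toFinset (by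
      intro μ hμ
      rw [Finset.mem_coe, Multiset.mem_toFinset, Polynomial.mem_nthRoots hk]
      obtain ⟨v, hv⟩ :=
        (Module.End.hasEigenvalue_iff_mem_spectrum.mpr hμ).exists_hasEigenvector
      have h2 := hv.pow_apply k
      rw [← map_pow, hc] at h2
      have h3 : (c - μ ^ k) • v = 0 := by
        rw [sub_smul, ← h2]; simp
      exact (sub_eq_zero.mp ((smul_eq_zero.mp h3).resolve_right hv.2)).symm)
    refine h1.trans (Nat.mul_le_mul_right _ ?_)
    exact (Multiset.toFinset_card_le _).trans (Polynomial.card_nthRoots k c)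
  have hS := hbd (sGen n) 2 (by norm_num) (s_sq_comm n)
  have hU := hbd (sGen n * tGen n) 3 (by norm_num) (by rw [st_cube]; exact s_sq_comm n)
  have hf : (spectrum ℂ (ρ (tGen n))).Finite := Module.End.finite_spectrum _
  have hT := cent_bound (ρ (tGen n)) _ hpos (hpow _) hf.toFinset (by simp)
  rw [← Set.ncard_eq_toFinset_card _ hf] at hT
  have hle := spec_card (ρ (tGen n))
  have hmain := scott_bound n ρ hirr
  have hd : 0 < Module.finrank ℂ V := Module.finrank_pos
  generalize (spectrum ℂ (ρ (tGen n))).ncard = k at *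
  generalize Module.finrank ℂ V = d at *
  generalize Module.finrank ℂ (cent (ρ (tGen n))) = c1 at *
  generalize Module.finrank ℂ (cent (ρ (sGen n))) = c2 at *
  generalize Module.finrank ℂ (cent (ρ (sGen n * tGen n))) = c3 at *
  by_contra hne
  have hlt : k + 1 ≤ d := by omega
  have hd2 : (k + 1) ^ 2 ≤ d ^ 2 := Nat.pow_le_pow_left hlt 2
  generalize d ^ 2 = D at *
  interval_cases k <;> omega
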